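/- arXiv:1003.3907 — 7 statements merged into one kernel-verified Lean document; each statement's English description precedes it below -/
import Mathlib

section
/- For every real t > 0 and all α, β ≥ 0 with α + β ≥ 1 or α + β ≤ 1/2, the inequality (t^{1−α−β} + 1)² (t^{2α} − 1)(t^{2β} − 1) ≥ 16αβ(t − 1)² holds. -/
/-!
Write `t = exp (2 * x)`, `σ = α + β`. Dividing by `16 * exp (2 * x)`, the claim becomes
`4 α β sinh² x ≤ cosh² ((1 - σ) x) sinh (2 α x) sinh (2 β x)`, which is even in `x`, so `0 ≤ x`
may be assumed. It is the product of two inequalities, both consequences of the convexity of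
`sinh` on `[0, ∞)` in the form `sinh (c x) ≤ c sinh x` for `0 ≤ c ≤ 1` (`sinh_mul_le`):

* `4 α β sinh² (σ x) ≤ σ² sinh (2 α x) sinh (2 β x)` (`sinh_sq_le_sinh_mul_sinh`), from
  `sinh (2 α x) sinh (2 β x) = sinh² (σ x) - sinh² ((α - β) x)` and `|α - β| ≤ σ`;
* `σ sinh x ≤ cosh ((1 - σ) x) sinh (σ x)` (`mul_sinh_le_cosh_mul_sinh`), which by the
  product-to-sum formula says `(2 σ - 1) sinh x ≤ sinh ((2 σ - 1) x)`. This is where the condition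
  on `σ` enters: it says that `2 σ - 1` lies in `[-1, 0]` or in `[1, ∞)`.
-/

open Real

lemma sinh_convexOn : ConvexOn ℝ (Set.Ici 0) sinh := by
  refine convexOn_of_deriv2_nonneg (convex_Ici 0) continuous_sinh.continuousOn
    differentiable_sinh.differentiableOn ?_ ?_
  · rw [Real.deriv_sinh]
    exact differentiable_cosh.differentiableOn
  · intro x hx
    rw [interior_Ici] at hx
    simpa using (le_of_lt hx : (0 : ℝ) ≤ x)

lemma sinh_mul_le {c x : ℝ} (hc : 0 ≤ c) (hc1 : c ≤ 1) (hx : 0 ≤ x) :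
    sinh (c * x) ≤ c * sinh x := by
  have h := sinh_convexOn.2 (Set.mem_Ici.2 hx) (Set.mem_Ici.2 le_rfl) hc
    (sub_nonneg.2 hc1) (by ring)
  simpa using h

lemma le_sinh_mul {r x : ℝ} (hr : 1 ≤ r) (hx : 0 ≤ x) : r * sinh x ≤ sinh (r * x) := by
  have hr0 : 0 < r := by linarith
  have h := sinh_mul_le (inv_nonneg.2 hr0.le) (inv_le_one_of_one_le₀ hr)
    (mul_nonneg hr0.le hx)
  rw [inv_mul_cancel_left₀ hr0.ne'] at h
  calc r * sinh x ≤ r * (r⁻¹ * sinh (r * x)) := by gcongr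
    _ = sinh (r * x) := mul_inv_cancel_left₀ hr0.ne' _

lemma mul_sinh_le_cosh_mul_sinh {σ x : ℝ} (hσ : 0 ≤ σ) (hx : 0 ≤ x)
    (h : 1 ≤ σ ∨ σ ≤ 1 / 2) : σ * sinh x ≤ cosh ((1 - σ) * x) * sinh (σ * x) := by
  have key : (2 * σ - 1) * sinh x ≤ sinh ((2 * σ - 1) * x) := by
    rcases h with h | h
    · exact le_sinh_mul (by linarith) hx
    · have := sinh_mul_le (c := 1 - 2 * σ) (by linarith) (by linarith) hx
      rw [show (2 * σ - 1) * x = -((1 - 2 * σ) * x) by ring, sinh_neg]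
      linarith
  have e1 := sinh_add (σ * x) ((1 - σ) * x)
  have e2 := sinh_sub (σ * x) ((1 - σ) * x)
  rw [show σ * x + (1 - σ) * x = x by ring] at e1
  rw [show σ * x - (1 - σ) * x = (2 * σ - 1) * x by ring] at e2
  linarith

/-- A form of the log-convexity of `sinh u / u`: for a fixed sum `2 α + 2 β`, the product
`(sinh (2 α x) / (2 α)) * (sinh (2 β x) / (2 β))` is smallest at `α = β`. -/
lemma sinh_sq_le_sinh_mul_sinh {α β x : ℝ} (hα : 0 ≤ α) (hβ : 0 ≤ β) (hx : 0 ≤ x) :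
    4 * α * β * sinh ((α + β) * x) ^ 2 ≤
      (α + β) ^ 2 * (sinh (2 * α * x) * sinh (2 * β * x)) := by
  wlog hle : β ≤ α generalizing α β
  · have := this hβ hα (le_of_not_ge hle)
    rw [add_comm β α] at this
    linarith
  rcases hα.eq_or_lt with h0 | hpos
  · have : β = 0 := by linarith
    simp [← h0, this]
  have hs : 0 < α + β := by linarith
  have h := sinh_mul_le (c := (α - β) / (α + β)) (x := (α + β) * x)
    (div_nonneg (by linarith) hs.le) ((div_le_one hs).2 (by linarith)) (by positivity)
  rw [show (α - β) / (α + β) * ((α + β) * x) = (α - β) * x by field_simp] at h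
  have h1 : (α + β) * sinh ((α - β) * x) ≤ (α - β) * sinh ((α + β) * x) := by
    calc _ ≤ (α + β) * ((α - β) / (α + β) * sinh ((α + β) * x)) := by gcongr
      _ = _ := by field_simp
  have h2 : 0 ≤ (α + β) * sinh ((α - β) * x) :=
    mul_nonneg hs.le (sinh_nonneg_iff.2 (mul_nonneg (by linarith) hx))
  have h3 := pow_le_pow_left₀ h2 h1 2
  have e : sinh (2 * α * x) * sinh (2 * β * x) =
      sinh ((α + β) * x) ^ 2 - sinh ((α - β) * x) ^ 2 := by
    rw [show 2 * α * x = (α + β) * x + (α - β) * x by ring,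
      show 2 * β * x = (α + β) * x - (α - β) * x by ring, sinh_add, sinh_sub]
    linear_combination sinh ((α + β) * x) ^ 2 * cosh_sq ((α - β) * x) -
      sinh ((α - β) * x) ^ 2 * cosh_sq ((α + β) * x)
  rw [e]
  linarith

lemma hyperbolic_inequality {α β x : ℝ} (hα : 0 ≤ α) (hβ : 0 ≤ β)
    (h : 1 ≤ α + β ∨ α + β ≤ 1 / 2) :
    4 * α * β * sinh x ^ 2 ≤
      cosh ((1 - α - β) * x) ^ 2 * (sinh (2 * α * x) * sinh (2 * β * x)) := by
  wlog hx : 0 ≤ x generalizing x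
  · simpa using this (x := -x) (by linarith)
  rcases (add_nonneg hα hβ).eq_or_lt with h0 | hs
  · have h1 : α = 0 := by linarith
    have h2 : β = 0 := by linarith
    simp [h1, h2]
  have h1 := sinh_sq_le_sinh_mul_sinh hα hβ hx
  have h2 := pow_le_pow_left₀ (mul_nonneg hs.le (sinh_nonneg_iff.2 hx))
    (mul_sinh_le_cosh_mul_sinh hs.le hx h) 2
  rw [← sub_sub] at h2
  refine le_of_mul_le_mul_left ?_ (pow_pos hs 2)
  calc (α + β) ^ 2 * (4 * α * β * sinh x ^ 2)
      = 4 * α * β * ((α + β) * sinh x) ^ 2 := by ring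
    _ ≤ 4 * α * β * (cosh ((1 - α - β) * x) * sinh ((α + β) * x)) ^ 2 := by gcongr
    _ = cosh ((1 - α - β) * x) ^ 2 * (4 * α * β * sinh ((α + β) * x) ^ 2) := by ring
    _ ≤ cosh ((1 - α - β) * x) ^ 2 *
        ((α + β) ^ 2 * (sinh (2 * α * x) * sinh (2 * β * x))) := by gcongr
    _ = _ := by ring

lemma exp_two_mul_add_one (y : ℝ) : exp (2 * y) + 1 = 2 * exp y * cosh y := by
  have h : exp y * exp (-y) = 1 := by rw [← exp_add]; simp
  rw [cosh_eq, two_mul, exp_add]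
  linear_combination -h

lemma exp_two_mul_sub_one (y : ℝ) : exp (2 * y) - 1 = 2 * exp y * sinh y := by
  have h : exp y * exp (-y) = 1 := by rw [← exp_add]; simp
  rw [sinh_eq, two_mul, exp_add]
  linear_combination h

/-- Lemma 3.3: for `t > 0` and `α, β ≥ 0` with `α + β ≥ 1` or `α + β ≤ 1/2`,
`(t^{1−α−β} + 1)² (t^{2α} − 1)(t^{2β} − 1) ≥ 16αβ(t − 1)²`. -/
theorem key_inequality (t α β : ℝ) (ht : 0 < t) (hα : 0 ≤ α) (hβ : 0 ≤ β)
    (hcond : 1 ≤ α + β ∨ α + β ≤ 1/2) :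
    (t ^ (1 - α - β) + 1) ^ 2 * ((t ^ (2 * α) - 1) * (t ^ (2 * β) - 1)) ≥
      16 * α * β * (t - 1) ^ 2 := by
  obtain ⟨x, rfl⟩ : ∃ x, t = exp (2 * x) :=
    ⟨log t / 2, by rw [mul_div_cancel₀ _ two_ne_zero, exp_log ht]⟩
  have hp (s : ℝ) : exp (2 * x) ^ s = exp (2 * (s * x)) := by
    rw [← exp_mul]
    ring_nf
  rw [hp, hp, hp, exp_two_mul_add_one, exp_two_mul_sub_one, exp_two_mul_sub_one,
    exp_two_mul_sub_one]
  have he : exp ((1 - α - β) * x) ^ 2 * (exp (2 * α * x) * exp (2 * β * x)) = exp x ^ 2 := by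
    simp only [sq, ← exp_add]
    ring_nf
  have h := mul_le_mul_of_nonneg_left (hyperbolic_inequality (x := x) hα hβ hcond)
    (by positivity : 0 ≤ 16 * exp x ^ 2)
  calc 16 * α * β * (2 * exp x * sinh x) ^ 2
      = 16 * exp x ^ 2 * (4 * α * β * sinh x ^ 2) := by ring
    _ ≤ _ := h
    _ = _ := by rw [← he]; ring
end

section
/- For every real t ≥ 1 and every real k with k ≥ 1 or 0 ≤ k ≤ 1/2, the inequality (t^{1−k} + 1)(t^k − 1) ≥ 2k(t − 1) holds. -/
/-!
Put `t = exp (2 * x)` with `x ≥ 0`. After expanding the product, the claim reads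
`t ^ k - t ^ (1 - k) ≥ (2 * k - 1) * (t - 1)`, and dividing by `2 * exp x` turns it into
`sinh ((2 * k - 1) * x) ≥ (2 * k - 1) * sinh x`. Since `sinh` is convex on `[0, ∞)` and vanishes
at `0`, `sinh (b * x) ≤ b * sinh x` for `0 ≤ b ≤ 1` (`sinh_mul_le`). The case `k ≤ 1 / 2` is this
bound with `b = 1 - 2 * k`, by oddness of `sinh`; the case `k ≥ 1` is the same bound with
`b = 1 / (2 * k - 1)` at the point `(2 * k - 1) * x`.
-/

lemma convexOn_sinh_Ici : ConvexOn ℝ (Set.Ici 0) Real.sinh := by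
  apply convexOn_of_deriv2_nonneg (convex_Ici 0) Real.continuous_sinh.continuousOn
    Real.differentiable_sinh.differentiableOn
  · rw [Real.deriv_sinh]
    exact Real.differentiable_cosh.differentiableOn
  · intro x hx
    rw [interior_Ici] at hx
    simpa using le_of_lt hx

lemma sinh_mul_le_s4 {b x : ℝ} (hb : 0 ≤ b) (hb1 : b ≤ 1) (hx : 0 ≤ x) :
    Real.sinh (b * x) ≤ b * Real.sinh x := by
  have h := convexOn_sinh_Ici.2 (Set.mem_Ici.2 hx) (Set.mem_Ici.2 le_rfl) hb
    (sub_nonneg.2 hb1) (by ring)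
  simpa using h

/-- For `t ≥ 1` and `k ≥ 1` or `0 ≤ k ≤ 1/2`, `(t^{1−k} + 1)(t^k − 1) ≥ 2k(t − 1)`. -/
theorem pow_ineq (t k : ℝ) (ht : 1 ≤ t) (hk : 1 ≤ k ∨ (0 ≤ k ∧ k ≤ 1/2)) :
    (t ^ (1 - k) + 1) * (t ^ k - 1) ≥ 2 * k * (t - 1) := by
  obtain ⟨x, hx, rfl⟩ : ∃ x : ℝ, 0 ≤ x ∧ t = Real.exp (2 * x) := by
    refine ⟨Real.log t / 2, div_nonneg (Real.log_nonneg ht) zero_le_two, ?_⟩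
    rw [mul_div_cancel₀ _ two_ne_zero, Real.exp_log (by linarith)]
  have key : (2 * k - 1) * Real.sinh x ≤ Real.sinh ((2 * k - 1) * x) := by
    rcases hk with hk | ⟨hk0, hk1⟩
    · have ha : 0 < 2 * k - 1 := by linarith
      have h := sinh_mul_le_s4 (b := (2 * k - 1)⁻¹) (x := (2 * k - 1) * x) (by positivity)
        (inv_le_one_of_one_le₀ (by linarith)) (by positivity)
      rw [inv_mul_cancel_left₀ ha.ne'] at h
      exact (le_inv_mul_iff₀ ha).1 h
    · have h := sinh_mul_le_s4 (b := 1 - 2 * k) (by linarith) (by linarith) hx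
      rw [show (2 * k - 1) * x = -((1 - 2 * k) * x) by ring, Real.sinh_neg]
      linarith
  have h1 : Real.exp (2 * x) - 1 = 2 * Real.exp x * Real.sinh x := by
    rw [Real.sinh_eq, two_mul x, Real.exp_add, Real.exp_neg]
    field_simp
  have h2 : Real.exp (2 * x) ^ k - Real.exp (2 * x) ^ (1 - k)
      = 2 * Real.exp x * Real.sinh ((2 * k - 1) * x) := by
    rw [← Real.exp_mul, ← Real.exp_mul, Real.sinh_eq,
      show 2 * x * k = x + (2 * k - 1) * x by ring,
      show 2 * x * (1 - k) = x + -((2 * k - 1) * x) by ring, Real.exp_add, Real.exp_add]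
    ring
  have h3 : Real.exp (2 * x) ^ (1 - k) * Real.exp (2 * x) ^ k = Real.exp (2 * x) := by
    rw [← Real.rpow_add (Real.exp_pos _), sub_add_cancel, Real.rpow_one]
  have h4 := mul_le_mul_of_nonneg_left key (by positivity : 0 ≤ 2 * Real.exp x)
  linear_combination h4 - h3 - h2 + (2 * k - 1) * h1
end

section
/- For every real s ≥ 1 and every real p with 0 ≤ p ≤ 1, the inequality (1 − 2p)²(s − 1)² − (s^p − s^{1−p})² ≥ 0 holds; equivalently, (s^{2p} − 1)(s^{2(1−p)} − 1) ≥ 4p(1 − p)(s − 1)². -/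
/-!
Write `s = exp (2t)` with `t ≥ 0` and `q = 1 - 2p ∈ [-1, 1]`. Then `s - 1 = 2 eᵗ sinh t` and
`s^(1-p) - s^p = 2 eᵗ sinh (q t)`, so the first inequality is `sinh (q t)² ≤ q² sinh² t`. Up to the
sign of `q` this is `sinh (q t) ≤ q sinh t`, the convexity of `sinh` on `[0, ∞)`
(`sinh_mul_le_mul_sinh`). The second inequality is the first one rearranged, using
`s^p * s^(1-p) = s`.
-/

/-- `t ↦ q sinh t - sinh (q t)` vanishes at `0` and has derivative `q (cosh t - cosh (q t)) ≥ 0`. -/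
lemma sinh_mul_le_mul_sinh (q t : ℝ) (hq0 : 0 ≤ q) (hq1 : q ≤ 1) (ht : 0 ≤ t) :
    Real.sinh (q * t) ≤ q * Real.sinh t := by
  have hd : ∀ x : ℝ, HasDerivAt (fun x => q * Real.sinh x - Real.sinh (q * x))
      (q * Real.cosh x - Real.cosh (q * x) * (q * 1)) x := fun x =>
    ((Real.hasDerivAt_sinh x).const_mul q).sub (((hasDerivAt_id x).const_mul q).sinh)
  have hm : MonotoneOn (fun x => q * Real.sinh x - Real.sinh (q * x)) (Set.Ici 0) := by
    refine monotoneOn_of_deriv_nonneg (convex_Ici 0)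
      (fun x _ => (hd x).continuousAt.continuousWithinAt)
      (fun x _ => (hd x).differentiableAt.differentiableWithinAt) fun x hx => ?_
    rw [interior_Ici, Set.mem_Ioi] at hx
    rw [(hd x).deriv]
    have hc : Real.cosh (q * x) ≤ Real.cosh x := by
      rw [Real.cosh_le_cosh, abs_of_nonneg (by positivity), abs_of_pos hx]
      nlinarith
    nlinarith
  have h := hm (Set.mem_Ici.2 le_rfl) (Set.mem_Ici.2 ht) ht
  simp only [mul_zero, Real.sinh_zero, sub_zero] at h
  linarith

lemma sinh_mul_sq_le (q t : ℝ) (hq0 : -1 ≤ q) (hq1 : q ≤ 1) (ht : 0 ≤ t) :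
    Real.sinh (q * t) ^ 2 ≤ q ^ 2 * Real.sinh t ^ 2 := by
  rw [← mul_pow]
  rcases le_total 0 q with h | h
  · exact pow_le_pow_left₀ (Real.sinh_nonneg_iff.2 (by positivity))
      (sinh_mul_le_mul_sinh q t h hq1 ht) 2
  · have h' := pow_le_pow_left₀ (Real.sinh_nonneg_iff.2 (mul_nonneg (neg_nonneg.2 h) ht))
      (sinh_mul_le_mul_sinh (-q) t (by linarith) (by linarith) ht) 2
    simpa only [neg_mul, Real.sinh_neg, neg_sq] using h'

/-- For `s ≥ 1` and `0 ≤ p ≤ 1`, `(1 − 2p)²(s − 1)² − (s^p − s^{1−p})² ≥ 0`; equivalently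
`(s^{2p} − 1)(s^{2(1−p)} − 1) ≥ 4p(1 − p)(s − 1)²`. -/
theorem lemma_Ya_WYD (s p : ℝ) (hs : 1 ≤ s) (hp0 : 0 ≤ p) (hp1 : p ≤ 1) :
    (1 - 2 * p) ^ 2 * (s - 1) ^ 2 - (s ^ p - s ^ (1 - p)) ^ 2 ≥ 0 ∧
    (s ^ (2 * p) - 1) * (s ^ (2 * (1 - p)) - 1) ≥ 4 * p * (1 - p) * (s - 1) ^ 2 := by
  have hs0 : 0 < s := by linarith
  have hfirst : (1 - 2 * p) ^ 2 * (s - 1) ^ 2 - (s ^ p - s ^ (1 - p)) ^ 2 ≥ 0 := by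
    obtain ⟨t, ht⟩ : ∃ t, t = Real.log s / 2 := ⟨_, rfl⟩
    have ht0 : 0 ≤ t := by
      have := Real.log_nonneg hs
      linarith
    have hlog : Real.log s = 2 * t := by linarith
    have hs1 : s - 1 = 2 * Real.exp t * Real.sinh t := by
      have h1 : s = Real.exp t * Real.exp t := by
        rw [← Real.exp_add, ← two_mul, ← hlog, Real.exp_log hs0]
      have h2 : Real.exp t * Real.exp (-t) = 1 := by
        rw [← Real.exp_add, add_neg_cancel, Real.exp_zero]
      rw [Real.sinh_eq]
      linear_combination h1 + h2
    have hdiff : s ^ p - s ^ (1 - p) = -(2 * Real.exp t * Real.sinh ((1 - 2 * p) * t)) := by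
      have h1 : s ^ p = Real.exp t * Real.exp (-((1 - 2 * p) * t)) := by
        rw [Real.rpow_def_of_pos hs0, hlog, ← Real.exp_add]
        ring_nf
      have h2 : s ^ (1 - p) = Real.exp t * Real.exp ((1 - 2 * p) * t) := by
        rw [Real.rpow_def_of_pos hs0, hlog, ← Real.exp_add]
        ring_nf
      rw [h1, h2, Real.sinh_eq]
      ring
    have key := mul_le_mul_of_nonneg_left
      (sinh_mul_sq_le (1 - 2 * p) t (by linarith) (by linarith) ht0)
      (sq_nonneg (2 * Real.exp t))
    rw [hs1, hdiff]
    linarith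
  refine ⟨hfirst, ?_⟩
  have ha : s ^ (2 * p) = (s ^ p) ^ 2 := by
    rw [mul_comm, Real.rpow_mul hs0.le, Real.rpow_two]
  have hb : s ^ (2 * (1 - p)) = (s ^ (1 - p)) ^ 2 := by
    rw [mul_comm, Real.rpow_mul hs0.le, Real.rpow_two]
  have hab : s ^ p * s ^ (1 - p) = s := by
    rw [← Real.rpow_add hs0, add_sub_cancel, Real.rpow_one]
  have hid : (s ^ (2 * p) - 1) * (s ^ (2 * (1 - p)) - 1)
      = (s - 1) ^ 2 - (s ^ p - s ^ (1 - p)) ^ 2 := by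
    rw [ha, hb]
    linear_combination (s ^ p * s ^ (1 - p) + s - 2) * hab
  rw [hid]
  linarith
end

section
/- For every real t ≥ 1 and all α, β ≥ 0 with α + β > 0, the inequality (t^{2α} − 1)(t^{2β} − 1) ≥ (4αβ/(α+β)²)(t^{α+β} − 1)² holds. -/
lemma sinh_mul_le_s6 {w s : ℝ} (hw0 : 0 ≤ w) (hw1 : w ≤ 1) (hs : 0 ≤ s) :
    Real.sinh (w * s) ≤ w * Real.sinh s := by
  have h := convexOn_sinh_Ici.2 (x := s) (y := 0) hs (Set.mem_Ici.2 le_rfl) hw0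
    (sub_nonneg.2 hw1) (by ring)
  simpa using h

lemma sinh_add_mul_sinh_sub (s d : ℝ) :
    Real.sinh (s + d) * Real.sinh (s - d) = Real.sinh s ^ 2 - Real.sinh d ^ 2 := by
  rw [Real.sinh_add, Real.sinh_sub]
  linear_combination Real.sinh s ^ 2 * Real.cosh_sq d - Real.sinh d ^ 2 * Real.cosh_sq s

lemma exp_two_mul_sub_one_s6 (x : ℝ) :
    Real.exp (2 * x) - 1 = 2 * Real.exp x * Real.sinh x := by
  have h : Real.exp x * Real.exp (-x) = 1 := by rw [← Real.exp_add]; simp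
  rw [two_mul x, Real.exp_add, Real.sinh_eq]
  linear_combination h

/-- For `t ≥ 1`, `α, β ≥ 0` with `α + β > 0`,
`(t^{2α} − 1)(t^{2β} − 1) ≥ (4αβ/(α+β)²)(t^{α+β} − 1)²`. -/
theorem pow_product_ineq (t α β : ℝ) (ht : 1 ≤ t) (hα : 0 ≤ α) (hβ : 0 ≤ β)
    (hαβ : 0 < α + β) :
    (t ^ (2 * α) - 1) * (t ^ (2 * β) - 1) ≥
      4 * α * β / (α + β) ^ 2 * (t ^ (α + β) - 1) ^ 2 := by
  have ht0 : 0 < t := by linarith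
  have hL : 0 ≤ Real.log t := Real.log_nonneg ht
  obtain ⟨s, hs⟩ : ∃ s, s = (α + β) / 2 * Real.log t := ⟨_, rfl⟩
  obtain ⟨d, hd⟩ : ∃ d, d = (α - β) / 2 * Real.log t := ⟨_, rfl⟩
  have hs0 : 0 ≤ s := by rw [hs]; positivity
  have e1 : t ^ (2 * α) - 1 = 2 * Real.exp (s + d) * Real.sinh (s + d) := by
    rw [← exp_two_mul_sub_one_s6, Real.rpow_def_of_pos ht0, hs, hd]; ring_nf
  have e2 : t ^ (2 * β) - 1 = 2 * Real.exp (s - d) * Real.sinh (s - d) := by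
    rw [← exp_two_mul_sub_one_s6, Real.rpow_def_of_pos ht0, hs, hd]; ring_nf
  have e3 : t ^ (α + β) - 1 = 2 * Real.exp s * Real.sinh s := by
    rw [← exp_two_mul_sub_one_s6, Real.rpow_def_of_pos ht0, hs]; ring_nf
  have hexp : Real.exp (s + d) * Real.exp (s - d) = Real.exp s ^ 2 := by
    rw [← Real.exp_add, sq, ← Real.exp_add]; ring_nf
  have key : Real.sinh d ^ 2 ≤ ((α - β) / (α + β)) ^ 2 * Real.sinh s ^ 2 := by
    have hw1 : |α - β| / (α + β) ≤ 1 := by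
      rw [div_le_one hαβ, abs_le]; constructor <;> linarith
    have h := sinh_mul_le_s6 (by positivity) hw1 hs0
    have hds : |α - β| / (α + β) * s = |d| := by
      rw [hs, hd, abs_mul, abs_div, abs_of_nonneg hL, abs_two]
      field_simp
    rw [hds, ← Real.abs_sinh] at h
    have h2 := pow_le_pow_left₀ (abs_nonneg _) h 2
    rwa [sq_abs, mul_pow, div_pow, sq_abs, ← div_pow] at h2
  have hlhs : (t ^ (2 * α) - 1) * (t ^ (2 * β) - 1) =
      4 * Real.exp s ^ 2 * (Real.sinh s ^ 2 - Real.sinh d ^ 2) := by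
    rw [e1, e2, ← hexp, ← sinh_add_mul_sinh_sub]; ring
  have hcoef : 4 * α * β / (α + β) ^ 2 = 1 - ((α - β) / (α + β)) ^ 2 := by
    field_simp; ring
  rw [hlhs, e3, hcoef, ge_iff_le]
  calc _ = 4 * Real.exp s ^ 2 *
        (Real.sinh s ^ 2 - ((α - β) / (α + β)) ^ 2 * Real.sinh s ^ 2) := by ring
    _ ≤ _ := by gcongr
end

section
/- Let λ, μ > 0 be real numbers and let α, β ≥ 0 satisfy α + β ≥ 1 or α + β ≤ 1/2. Then λ + μ + f_{α+β}(λ,μ) ≥ f_α(λ,μ) + f_β(λ,μ). -/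
/-!
Dividing out powers, the difference of the two sides factors: with `A = λ^α`, `B = λ^β`,
`C = μ^α`, `D = μ^β` it equals `(A - C) (B - D) (μ / (C D) + λ / (A B))`.  Since `α, β ≥ 0`, both
`A - C` and `B - D` have the sign of `λ - μ`, so the product is nonnegative.
-/

/-- `f_α(x,y) = x^α y^{1−α} + x^{1−α} y^α`. -/
noncomputable def fWYD (a x y : ℝ) : ℝ := x ^ a * y ^ (1 - a) + x ^ (1 - a) * y ^ a

/-- For nonnegative exponents, `x ^ a - y ^ a` and `x ^ b - y ^ b` have the same sign. -/
lemma rpow_sub_mul_rpow_sub_nonneg {x y a b : ℝ} (hx : 0 < x) (hy : 0 < y)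
    (ha : 0 ≤ a) (hb : 0 ≤ b) : 0 ≤ (x ^ a - y ^ a) * (x ^ b - y ^ b) := by
  rcases le_total x y with h | h
  · exact mul_nonneg_of_nonpos_of_nonpos
      (sub_nonpos.2 (Real.rpow_le_rpow hx.le h ha)) (sub_nonpos.2 (Real.rpow_le_rpow hx.le h hb))
  · exact mul_nonneg
      (sub_nonneg.2 (Real.rpow_le_rpow hy.le h ha)) (sub_nonneg.2 (Real.rpow_le_rpow hy.le h hb))

/-- For `λ, μ > 0` and `α, β ≥ 0` with `α + β ≥ 1` or `α + β ≤ 1/2`,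
`λ + μ + f_{α+β}(λ,μ) ≥ f_α(λ,μ) + f_β(λ,μ)`. -/
theorem f_sum_ineq (lam mu α β : ℝ) (hlam : 0 < lam) (hmu : 0 < mu)
    (hα : 0 ≤ α) (hβ : 0 ≤ β) (hcond : 1 ≤ α + β ∨ α + β ≤ 1/2) :
    lam + mu + fWYD (α + β) lam mu ≥ fWYD α lam mu + fWYD β lam mu := by
  have hsign := rpow_sub_mul_rpow_sub_nonneg hlam hmu hα hβ
  have hA := Real.rpow_pos_of_pos hlam α
  have hB := Real.rpow_pos_of_pos hlam β
  have hC := Real.rpow_pos_of_pos hmu α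
  have hD := Real.rpow_pos_of_pos hmu β
  simp only [fWYD, Real.rpow_sub hlam, Real.rpow_sub hmu, Real.rpow_add hlam, Real.rpow_add hmu,
    Real.rpow_one]
  generalize lam ^ α = A at *
  generalize lam ^ β = B at *
  generalize mu ^ α = C at *
  generalize mu ^ β = D at *
  have hfactor : 0 ≤ (A - C) * (B - D) * (mu / (C * D) + lam / (A * B)) :=
    mul_nonneg hsign (by positivity)
  rw [ge_iff_le, ← sub_nonneg]
  convert hfactor using 1
  field_simp
  ring
end

section
/- Let ρ be an invertible density matrix on ℂⁿ, let H be an n×n Hermitian matrix, and let α, β ≥ 0 satisfy α + β ≥ 1 or α + β ≤ 1/2. Then I_{ρ,α,β}(H) ≥ 0. -/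
/-!
Write `ρ = U diag(λ) U*` and `G = U* H₀ U`, which is Hermitian. Then
`Tr[ρ^s H₀ ρ^t H₀] = ∑ i j, λ i ^ s * λ j ^ t * |G i j|²` (`trace_matRpow_mul`), and writing
`Tr[ρ H₀²] = Tr[ρ^0 H₀ ρ^1 H₀]`, the quantity `2 I_{ρ,α,β}(H)` becomes the sum of
`|G i j|²` against the weights
`y + x^(α+β) y^(1-α-β) - x^α y^(1-α) - x^β y^(1-β) = y (1 - r^α) (1 - r^β)`,
where `x = λ i`, `y = λ j` and `r = x / y`. For `α, β ≥ 0` the two factors `1 - r^α` and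
`1 - r^β` have the same sign, so every term is nonnegative (`weight_nonneg`).
-/

open Matrix ComplexOrder

/-- Real power of a positive definite matrix via functional calculus
(eigendecomposition). -/
noncomputable def matRpow {n : ℕ} {ρ : Matrix (Fin n) (Fin n) ℂ} (hρ : ρ.PosDef) (s : ℝ) :
    Matrix (Fin n) (Fin n) ℂ :=
  (hρ.1.eigenvectorUnitary : Matrix (Fin n) (Fin n) ℂ) *
    Matrix.diagonal (fun i => ((hρ.1.eigenvalues i ^ s : ℝ) : ℂ)) *
    (star (hρ.1.eigenvectorUnitary : Matrix (Fin n) (Fin n) ℂ))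

/-- `H₀ = H - Tr[ρH]·I`. -/
noncomputable def H0 {n : ℕ} (ρ H : Matrix (Fin n) (Fin n) ℂ) : Matrix (Fin n) (Fin n) ℂ :=
  H - (Matrix.trace (ρ * H)) • (1 : Matrix (Fin n) (Fin n) ℂ)

/-- Generalized Wigner–Yanase–Dyson skew information `I_{ρ,α,β}(H)`. -/
noncomputable def wydI {n : ℕ} {ρ : Matrix (Fin n) (Fin n) ℂ} (hρ : ρ.PosDef) (α β : ℝ)
    (H : Matrix (Fin n) (Fin n) ℂ) : ℝ :=
  (1/2) * (Matrix.trace (ρ * H0 ρ H * H0 ρ H)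
    + Matrix.trace (matRpow hρ (α+β) * H0 ρ H * matRpow hρ (1-α-β) * H0 ρ H)
    - Matrix.trace (matRpow hρ α * H0 ρ H * matRpow hρ (1-α) * H0 ρ H)
    - Matrix.trace (matRpow hρ β * H0 ρ H * matRpow hρ (1-β) * H0 ρ H)).re

/-- `J_{ρ,α,β}(H)`. -/
noncomputable def wydJ {n : ℕ} {ρ : Matrix (Fin n) (Fin n) ℂ} (hρ : ρ.PosDef) (α β : ℝ)
    (H : Matrix (Fin n) (Fin n) ℂ) : ℝ :=
  (1/2) * (Matrix.trace (ρ * H0 ρ H * H0 ρ H)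
    + Matrix.trace (matRpow hρ (α+β) * H0 ρ H * matRpow hρ (1-α-β) * H0 ρ H)
    + Matrix.trace (matRpow hρ α * H0 ρ H * matRpow hρ (1-α) * H0 ρ H)
    + Matrix.trace (matRpow hρ β * H0 ρ H * matRpow hρ (1-β) * H0 ρ H)).re

/-- `U_{ρ,α,β}(H) = √(I_{ρ,α,β}(H)·J_{ρ,α,β}(H))`. -/
noncomputable def wydU {n : ℕ} {ρ : Matrix (Fin n) (Fin n) ℂ} (hρ : ρ.PosDef) (α β : ℝ)
    (H : Matrix (Fin n) (Fin n) ℂ) : ℝ :=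
  Real.sqrt (wydI hρ α β H * wydJ hρ α β H)

/-- Nonnegativity of the coefficient of `|G i j|²`: it factors as `y (1 - r^α) (1 - r^β)`
with `r = x / y`. The first term is written as `x ^ 0 * y ^ 1` to match `trace_matRpow_mul`. -/
lemma weight_nonneg {x y α β : ℝ} (hx : 0 < x) (hy : 0 < y) (hα : 0 ≤ α) (hβ : 0 ≤ β) :
    0 ≤ x ^ (0 : ℝ) * y ^ (1 : ℝ) + x ^ (α + β) * y ^ (1 - α - β) - x ^ α * y ^ (1 - α)
      - x ^ β * y ^ (1 - β) := by
  have hr : 0 < x / y := div_pos hx hy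
  have key : x ^ (0 : ℝ) * y ^ (1 : ℝ) + x ^ (α + β) * y ^ (1 - α - β) - x ^ α * y ^ (1 - α)
      - x ^ β * y ^ (1 - β) = y * ((1 - (x / y) ^ α) * (1 - (x / y) ^ β)) := by
    have h1 := (Real.rpow_pos_of_pos hy α).ne'
    have h2 := (Real.rpow_pos_of_pos hy β).ne'
    rw [Real.rpow_zero, Real.rpow_one, Real.rpow_add hx, Real.rpow_sub hy (1 - α),
      Real.rpow_sub hy, Real.rpow_sub hy, Real.rpow_one, Real.div_rpow hx.le hy.le,
      Real.div_rpow hx.le hy.le]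
    field_simp
    ring
  rw [key]
  refine mul_nonneg hy.le ?_
  rcases le_total (x / y) 1 with h | h
  · exact mul_nonneg (sub_nonneg.2 (Real.rpow_le_one hr.le h hα))
      (sub_nonneg.2 (Real.rpow_le_one hr.le h hβ))
  · exact mul_nonneg_of_nonpos_of_nonpos (sub_nonpos.2 (Real.one_le_rpow h hα))
      (sub_nonpos.2 (Real.one_le_rpow h hβ))

lemma matRpow_zero {n : ℕ} {ρ : Matrix (Fin n) (Fin n) ℂ} (hρ : ρ.PosDef) :
    matRpow hρ 0 = 1 := by
  simp [matRpow]

lemma matRpow_one {n : ℕ} {ρ : Matrix (Fin n) (Fin n) ℂ} (hρ : ρ.PosDef) :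
    matRpow hρ 1 = ρ := by
  conv_rhs => rw [hρ.1.spectral_theorem]
  simp [matRpow, Unitary.conjStarAlgAut_apply, Function.comp_def]

lemma H0_isHermitian {n : ℕ} {ρ H : Matrix (Fin n) (Fin n) ℂ} (hρ : ρ.IsHermitian)
    (hH : H.IsHermitian) : (H0 ρ H).IsHermitian := by
  have h : star (Matrix.trace (ρ * H)) = Matrix.trace (ρ * H) := by
    rw [← Matrix.trace_conjTranspose, Matrix.conjTranspose_mul, hρ.eq, hH.eq, Matrix.trace_mul_comm]
  unfold H0 Matrix.IsHermitian
  rw [Matrix.conjTranspose_sub, Matrix.conjTranspose_smul, h, hH.eq, Matrix.conjTranspose_one]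

/-- The trace `Tr[ρ^s K ρ^t K]` expanded in an eigenbasis of `ρ`. -/
lemma trace_matRpow_mul {n : ℕ} {ρ K : Matrix (Fin n) (Fin n) ℂ} (hρ : ρ.PosDef)
    (hK : K.IsHermitian) (s t : ℝ) :
    (Matrix.trace (matRpow hρ s * K * matRpow hρ t * K)).re =
      ∑ i, ∑ j, hρ.1.eigenvalues i ^ s * hρ.1.eigenvalues j ^ t *
        Complex.normSq ((star (hρ.1.eigenvectorUnitary : Matrix (Fin n) (Fin n) ℂ) * K *
          (hρ.1.eigenvectorUnitary : Matrix (Fin n) (Fin n) ℂ)) i j) := by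
  unfold matRpow
  set U : Matrix (Fin n) (Fin n) ℂ := (hρ.1.eigenvectorUnitary : Matrix (Fin n) (Fin n) ℂ)
  set D : ℝ → Matrix (Fin n) (Fin n) ℂ := fun s =>
    Matrix.diagonal (fun i => ((hρ.1.eigenvalues i ^ s : ℝ) : ℂ)) with hD
  set G := star U * K * U with hG
  have hGh : G.IsHermitian := by
    simp only [hG, Matrix.IsHermitian, Matrix.star_eq_conjTranspose, Matrix.conjTranspose_mul,
      Matrix.conjTranspose_conjTranspose, hK.eq, Matrix.mul_assoc]
  have h : Matrix.trace (U * D s * star U * K * (U * D t * star U) * K)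
      = Matrix.trace (D s * G * (D t * G)) := by
    rw [show U * D s * star U * K * (U * D t * star U) * K
      = U * (D s * star U * K * U * D t * star U * K) by simp only [Matrix.mul_assoc],
      Matrix.trace_mul_comm]
    simp only [hG, Matrix.mul_assoc]
  change (Matrix.trace (U * D s * star U * K * (U * D t * star U) * K)).re = _
  rw [h, Matrix.trace, Complex.re_sum]
  refine Finset.sum_congr rfl fun i _ => ?_
  rw [Matrix.diag_apply, Matrix.mul_apply, Complex.re_sum]
  refine Finset.sum_congr rfl fun j _ => ?_
  simp only [hD, Matrix.diagonal_mul]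
  rw [← hGh.apply j i, mul_mul_mul_comm,
    show G i j * star (G i j) = (Complex.normSq (G i j) : ℂ) from Complex.mul_conj _,
    ← Complex.ofReal_mul, ← Complex.ofReal_mul, Complex.ofReal_re]

/-- Nonnegativity of the generalized WYD skew information `I_{ρ,α,β}(H) ≥ 0`
for `α + β ≥ 1` or `α + β ≤ 1/2`. -/
theorem wydI_nonneg {n : ℕ} (ρ H : Matrix (Fin n) (Fin n) ℂ) (hρ : ρ.PosDef)
    (hρtr : Matrix.trace ρ = 1) (hH : H.IsHermitian)
    (α β : ℝ) (hα : 0 ≤ α) (hβ : 0 ≤ β) (hcond : 1 ≤ α + β ∨ α + β ≤ 1/2) :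
    0 ≤ wydI hρ α β H := by
  have hK := H0_isHermitian hρ.1 hH
  have h0 : Matrix.trace (ρ * H0 ρ H * H0 ρ H)
      = Matrix.trace (matRpow hρ 0 * H0 ρ H * matRpow hρ 1 * H0 ρ H) := by
    rw [matRpow_zero, matRpow_one, Matrix.one_mul, Matrix.trace_mul_comm, Matrix.mul_assoc]
  unfold wydI
  refine mul_nonneg (by norm_num) ?_
  rw [h0, Complex.sub_re, Complex.sub_re, Complex.add_re]
  simp only [trace_matRpow_mul hρ hK, ← Finset.sum_add_distrib, ← Finset.sum_sub_distrib,
    ← add_mul, ← sub_mul]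
  exact Finset.sum_nonneg fun i _ => Finset.sum_nonneg fun j _ => mul_nonneg
    (weight_nonneg (hρ.eigenvalues_pos i) (hρ.eigenvalues_pos j) hα hβ) (Complex.normSq_nonneg _)
end

section
/- Let ρ be an invertible density matrix on ℂⁿ, let H be an n×n Hermitian matrix, and let 0 ≤ α ≤ 1. Then I_{ρ,α}(H) ≤ I_ρ(H) ≤ J_ρ(H) ≤ J_{ρ,α}(H), where I_ρ = I_{ρ,1/2} and J_ρ = J_{ρ,1/2}. -/
/-!
Only the cross term `Tr[ρ^α H₀ ρ^{1-α} H₀]` depends on `α`, so the chain reduces to two facts about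
it: at `α = 1/2` it is nonnegative, and its value at `1/2` is at most its value at `α`. In an
eigenbasis of `ρ` with eigenvalues `λᵢ`, and with `K = U* H₀ U` Hermitian, the cross term equals
`∑ᵢⱼ λᵢ^α λⱼ^{1-α} |Kᵢⱼ|²` (`re_trace_matRpow`). Its weights are positive, and `|Kᵢⱼ|²` is
symmetric in `i, j`, so the weights may be symmetrized; then
`λᵢ^α λⱼ^{1-α} + λⱼ^α λᵢ^{1-α} ≥ 2 √(λᵢ λⱼ)` by the arithmetic–geometric mean inequality
(`rpow_cross_amgm`).
-/

open Matrix ComplexOrder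

/-- One-parameter Wigner–Yanase–Dyson skew information
`I_{ρ,α}(H) = Tr[ρH₀²] − Tr[ρ^α H₀ ρ^{1−α} H₀]`. -/
noncomputable def wyd1I {n : ℕ} {ρ : Matrix (Fin n) (Fin n) ℂ} (hρ : ρ.PosDef) (α : ℝ)
    (H : Matrix (Fin n) (Fin n) ℂ) : ℝ :=
  (Matrix.trace (ρ * H0 ρ H * H0 ρ H)
    - Matrix.trace (matRpow hρ α * H0 ρ H * matRpow hρ (1-α) * H0 ρ H)).re

/-- `J_{ρ,α}(H) = Tr[ρH₀²] + Tr[ρ^α H₀ ρ^{1−α} H₀]`. -/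
noncomputable def wyd1J {n : ℕ} {ρ : Matrix (Fin n) (Fin n) ℂ} (hρ : ρ.PosDef) (α : ℝ)
    (H : Matrix (Fin n) (Fin n) ℂ) : ℝ :=
  (Matrix.trace (ρ * H0 ρ H * H0 ρ H)
    + Matrix.trace (matRpow hρ α * H0 ρ H * matRpow hρ (1-α) * H0 ρ H)).re

/-- The variance `V_ρ(H) = Tr[ρH₀²]`. -/
noncomputable def varRho {n : ℕ} (ρ H : Matrix (Fin n) (Fin n) ℂ) : ℝ :=
  (Matrix.trace (ρ * H0 ρ H * H0 ρ H)).re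

/-- `Tr[ρ^a X ρ^b X]` in an eigenbasis of `ρ`: the weights, independent of `a` and `b`, are
`w i j = |(U* X U)ᵢⱼ|²`, where `U` diagonalizes `ρ`. -/
lemma re_trace_matRpow {n : ℕ} {ρ : Matrix (Fin n) (Fin n) ℂ} (hρ : ρ.PosDef)
    {X : Matrix (Fin n) (Fin n) ℂ} (hX : X.IsHermitian) :
    ∃ w : Fin n → Fin n → ℝ, (∀ i j, 0 ≤ w i j) ∧ (∀ i j, w i j = w j i) ∧
      ∀ a b : ℝ, (Matrix.trace (matRpow hρ a * X * matRpow hρ b * X)).re =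
        ∑ i, ∑ j, hρ.1.eigenvalues i ^ a * hρ.1.eigenvalues j ^ b * w i j := by
  set U : Matrix (Fin n) (Fin n) ℂ :=
    (hρ.1.eigenvectorUnitary : Matrix (Fin n) (Fin n) ℂ) with hU
  set K : Matrix (Fin n) (Fin n) ℂ := star U * X * U with hK
  have hKH : ∀ i j, K j i = starRingEnd ℂ (K i j) := by
    have h : K.IsHermitian := by
      unfold Matrix.IsHermitian
      simp [hK, Matrix.star_eq_conjTranspose, Matrix.conjTranspose_mul, hX.eq, Matrix.mul_assoc]
    exact fun i j => (h.apply j i).symm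
  refine ⟨fun i j => Complex.normSq (K i j), fun i j => Complex.normSq_nonneg _, fun i j => ?_,
    fun a b => ?_⟩
  · simp only [hKH i j, Complex.normSq_conj]
  · have hcyc : Matrix.trace (matRpow hρ a * X * matRpow hρ b * X) =
        Matrix.trace (Matrix.diagonal (fun i => ((hρ.1.eigenvalues i ^ a : ℝ) : ℂ)) * K *
          (Matrix.diagonal (fun i => ((hρ.1.eigenvalues i ^ b : ℝ) : ℂ)) * K)) := by
      unfold matRpow
      rw [← hU, hK]
      simp only [Matrix.mul_assoc]
      rw [Matrix.trace_mul_comm]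
      simp only [Matrix.mul_assoc]
    rw [hcyc, Matrix.trace, Complex.re_sum]
    refine Finset.sum_congr rfl fun i _ => ?_
    rw [Matrix.diag_apply, Matrix.mul_apply, Complex.re_sum]
    refine Finset.sum_congr rfl fun j _ => ?_
    rw [Matrix.diagonal_mul, Matrix.diagonal_mul, hKH i j,
      mul_mul_mul_comm, Complex.mul_conj, ← Complex.ofReal_mul, ← Complex.ofReal_mul,
      Complex.ofReal_re]

lemma rpow_cross_amgm {x y : ℝ} (hx : 0 < x) (hy : 0 < y) (α : ℝ) :
    2 * (x ^ (1 / 2 : ℝ) * y ^ (1 - 1 / 2 : ℝ)) ≤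
      x ^ α * y ^ (1 - α) + y ^ α * x ^ (1 - α) := by
  have key : ∀ z : ℝ, 0 < z → ∀ s : ℝ, z ^ s * z ^ (1 - s) = z := fun z hz s => by
    rw [← Real.rpow_add hz, add_sub_cancel, Real.rpow_one]
  have half : ∀ z : ℝ, 0 < z → z ^ (1 / 2 : ℝ) * z ^ (1 / 2 : ℝ) = z := fun z hz => by
    rw [← Real.rpow_add hz]; norm_num
  rw [show (1 - 1 / 2 : ℝ) = 1 / 2 by norm_num]
  -- The square of the left side is `4xy`, and the two summands on the right have product `xy`.
  have hsq : (x ^ (1 / 2 : ℝ) * y ^ (1 / 2 : ℝ)) ^ 2 =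
      (x ^ α * y ^ (1 - α)) * (y ^ α * x ^ (1 - α)) := by
    calc _ = (x ^ (1 / 2 : ℝ) * x ^ (1 / 2 : ℝ)) * (y ^ (1 / 2 : ℝ) * y ^ (1 / 2 : ℝ)) := by ring
      _ = (x ^ α * x ^ (1 - α)) * (y ^ α * y ^ (1 - α)) := by
        rw [half x hx, half y hy, key x hx, key y hy]
      _ = _ := by ring
  have hp : 0 < x ^ α * y ^ (1 - α) := by positivity
  have hq : 0 < y ^ α * x ^ (1 - α) := by positivity
  refine le_of_sq_le_sq ?_ (by positivity)
  nlinarith [sq_nonneg (x ^ α * y ^ (1 - α) - y ^ α * x ^ (1 - α))]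

/-- `I_{ρ,α}(H) ≤ I_ρ(H) ≤ J_ρ(H) ≤ J_{ρ,α}(H)`, where `I_ρ = I_{ρ,1/2}`, `J_ρ = J_{ρ,1/2}`. -/
theorem wyd1_chain {n : ℕ} (ρ H : Matrix (Fin n) (Fin n) ℂ) (hρ : ρ.PosDef)
    (hρtr : Matrix.trace ρ = 1) (hH : H.IsHermitian) (α : ℝ) (hα0 : 0 ≤ α) (hα1 : α ≤ 1) :
    wyd1I hρ α H ≤ wyd1I hρ (1/2) H ∧ wyd1I hρ (1/2) H ≤ wyd1J hρ (1/2) H ∧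
      wyd1J hρ (1/2) H ≤ wyd1J hρ α H := by
  obtain ⟨w, hw0, hws, hT⟩ := re_trace_matRpow hρ (H0_isHermitian hρ.1 hH)
  have hpos := hρ.eigenvalues_pos
  set l := hρ.1.eigenvalues
  have hnonneg : 0 ≤ ∑ i, ∑ j, l i ^ (1 / 2 : ℝ) * l j ^ (1 - 1 / 2 : ℝ) * w i j :=
    Finset.sum_nonneg fun i _ => Finset.sum_nonneg fun j _ =>
      mul_nonneg (mul_nonneg (Real.rpow_nonneg (hpos i).le _) (Real.rpow_nonneg (hpos j).le _))
        (hw0 i j)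
  have hswap : ∑ i, ∑ j, l i ^ α * l j ^ (1 - α) * w i j =
      ∑ i, ∑ j, l j ^ α * l i ^ (1 - α) * w i j := by
    rw [Finset.sum_comm]
    exact Finset.sum_congr rfl fun i _ => Finset.sum_congr rfl fun j _ => by rw [hws j i]
  have hle : 2 * ∑ i, ∑ j, l i ^ (1 / 2 : ℝ) * l j ^ (1 - 1 / 2 : ℝ) * w i j ≤
      ∑ i, ∑ j, l i ^ α * l j ^ (1 - α) * w i j +
        ∑ i, ∑ j, l j ^ α * l i ^ (1 - α) * w i j := by
    simp only [Finset.mul_sum, ← Finset.sum_add_distrib]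
    refine Finset.sum_le_sum fun i _ => Finset.sum_le_sum fun j _ => ?_
    rw [← mul_assoc, ← add_mul]
    exact mul_le_mul_of_nonneg_right (rpow_cross_amgm (hpos i) (hpos j) α) (hw0 i j)
  simp only [wyd1I, wyd1J, Complex.sub_re, Complex.add_re, hT]
  refine ⟨?_, ?_, ?_⟩ <;> linarith
end
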